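/- Suppose d < 0 and γ_r ∈ ℝ are such that E[∫₀^{τ∧T} e^{−α_s} (f(X_s) − d) ds] ≤ γ_r for every stopping time τ and every T ≥ 0. If σ is an integrable stopping time (E[σ] < ∞) such that E[∫₀^σ e^{−α_s} f(X_s) ds + e^{−α_σ} g(X_σ)] ≥ −‖g‖ − ε for some ε ≥ 0, then E[∫₀^σ e^{−α_s} ds] ≤ (γ_r + 2‖g‖ + ε)/(−d). -/

import Mathlib

open MeasureTheory Filter Set
open scoped ENNReal Topology

theorem aux_joint {Ω : Type*} {m0 : MeasurableSpace Ω}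
    (𝓕 : Filtration ℝ m0)
    {E : Type*} [MetricSpace E] [MeasurableSpace E] [BorelSpace E]
    (X : ℝ → Ω → E) (hX : ProgMeasurable 𝓕 X) :
    Measurable (fun p : ℝ × Ω => X p.1 p.2) := by
  have key : ∀ n : ℕ, Measurable (fun p : ℝ × Ω => X (min p.1 n) p.2) := by
    intro n
    have h1 : Measurable[Subtype.instMeasurableSpace.prod m0]
        (fun p : Set.Iic (n : ℝ) × Ω => X p.1 p.2) :=
      (hX (n : ℝ)).measurable.mono
        (sup_le_sup le_rfl (MeasurableSpace.comap_mono (𝓕.le _))) le_rfl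
    have h2 : Measurable (fun p : ℝ × Ω =>
        ((⟨min p.1 n, Set.mem_Iic.2 (min_le_right _ _)⟩ : Set.Iic (n : ℝ)), p.2)) :=
      ((measurable_fst.min measurable_const).subtype_mk).prodMk measurable_snd
    exact h1.comp h2
  refine measurable_of_tendsto_metrizable key ?_
  rw [tendsto_pi_nhds]
  intro p
  refine tendsto_const_nhds.congr' ?_
  filter_upwards [eventually_ge_atTop (⌈p.1⌉₊)] with n hn
  have : p.1 ≤ n := (Nat.le_ceil _).trans (by exact_mod_cast hn)
  rw [min_eq_left this]

theorem aux_int {Ω : Type*} {m0 : MeasurableSpace Ω} (h : ℝ × Ω → ℝ) (hh : Measurable h) :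
    Measurable (fun p : ℝ × Ω => ∫ u in (0:ℝ)..p.1, h (u, p.2)) := by
  have hm : Measurable (fun q : (ℝ × Ω) × ℝ => h (q.2, q.1.2)) :=
    hh.comp (measurable_snd.prodMk measurable_fst.snd)
  have e1 : MeasurableSet {q : (ℝ × Ω) × ℝ | 0 < q.2 ∧ q.2 ≤ q.1.1} :=
    (measurableSet_lt measurable_const measurable_snd).inter
      (measurableSet_le measurable_snd measurable_fst.fst)
  have e2 : MeasurableSet {q : (ℝ × Ω) × ℝ | q.1.1 < q.2 ∧ q.2 ≤ 0} :=
    (measurableSet_lt measurable_fst.fst measurable_snd).inter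
      (measurableSet_le measurable_snd measurable_const)
  have m1 := ((hm.indicator e1).stronglyMeasurable.integral_prod_right' (ν := volume)).measurable
  have m2 := ((hm.indicator e2).stronglyMeasurable.integral_prod_right' (ν := volume)).measurable
  convert m1.sub m2 using 1
  funext p
  simp only [intervalIntegral, Pi.sub_apply]
  rw [← integral_indicator measurableSet_Ioc, ← integral_indicator measurableSet_Ioc]
  rfl

/-- discounted version of the bound on near-optimal stopping times:
`E[∫₀^σ e^{−α_s} ds] ≤ (γ_r + 2‖g‖ + ε)/(−d)`, where `α_t = ∫₀^t r(X_u) du`. -/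
theorem stmt12
    {Ω : Type*} {m0 : MeasurableSpace Ω} (P : Measure Ω) [IsProbabilityMeasure P]
    (𝓕 : Filtration ℝ m0)
    {E : Type*} [MetricSpace E] [MeasurableSpace E] [BorelSpace E]
    (X : ℝ → Ω → E) (hX : ProgMeasurable 𝓕 X)
    (f g : E → ℝ) (hf : Measurable f) (hg : Measurable g)
    (Cf Cg : ℝ) (hfb : ∀ x, |f x| ≤ Cf) (hgb : ∀ x, |g x| ≤ Cg)
    (r : E → ℝ) (hr : Measurable r) (Cr : ℝ) (hrb : ∀ x, |r x| ≤ Cr)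
    (hr0 : ∀ x, 0 ≤ r x)
    (d γr : ℝ) (hd : d < 0)
    (hγ : ∀ τ : Ω → ℝ, IsStoppingTime 𝓕 (fun ω => ((τ ω : ℝ) : WithTop ℝ)) → (∀ ω, 0 ≤ τ ω) → ∀ T : ℝ, 0 ≤ T →
      ∫ ω, (∫ s in (0:ℝ)..(min (τ ω) T),
        Real.exp (-(∫ u in (0:ℝ)..s, r (X u ω))) * (f (X s ω) - d)) ∂P ≤ γr)
    (σ : Ω → ℝ) (hσ : IsStoppingTime 𝓕 (fun ω => ((σ ω : ℝ) : WithTop ℝ))) (hσ0 : ∀ ω, 0 ≤ σ ω)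
    (hσint : Integrable σ P)
    (ε : ℝ) (hε : 0 ≤ ε)
    (hval : -Cg - ε ≤ ∫ ω,
      ((∫ s in (0:ℝ)..(σ ω), Real.exp (-(∫ u in (0:ℝ)..s, r (X u ω))) * f (X s ω))
        + Real.exp (-(∫ u in (0:ℝ)..(σ ω), r (X u ω))) * g (X (σ ω) ω)) ∂P) :
    ∫ ω, (∫ s in (0:ℝ)..(σ ω), Real.exp (-(∫ u in (0:ℝ)..s, r (X u ω)))) ∂P
      ≤ (γr + 2 * Cg + ε) / (-d) := by
  have hXm := aux_joint 𝓕 X hX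
  have hσm : Measurable σ := by
    refine measurable_of_Iic fun t => ?_
    have := 𝓕.le t _ (hσ t)
    have e : {ω | ((σ ω : ℝ) : WithTop ℝ) ≤ ((t : ℝ) : WithTop ℝ)} = σ ⁻¹' Iic t := by
      ext ω
      simp [WithTop.coe_le_coe]
    rw [← e]
    exact this
  have hαm : Measurable (fun p : ℝ × Ω => ∫ u in (0:ℝ)..p.1, r (X u p.2)) :=
    aux_int (fun p => r (X p.1 p.2)) (hr.comp hXm)
  obtain ⟨D, hD⟩ : ∃ D : ℝ → Ω → ℝ, D = fun s ω => Real.exp (-(∫ u in (0:ℝ)..s, r (X u ω))) :=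
    ⟨_, rfl⟩
  have hDe : ∀ s ω, Real.exp (-(∫ u in (0:ℝ)..s, r (X u ω))) = D s ω := by
    intro s ω; rw [hD]
  simp only [hDe] at hγ hval ⊢
  have hDm : Measurable (fun p : ℝ × Ω => D p.1 p.2) := by
    rw [hD]; exact hαm.neg.exp
  have hD0 : ∀ s ω, 0 ≤ D s ω := fun s ω => by rw [hD]; positivity
  have hD1 : ∀ s ω, 0 ≤ s → D s ω ≤ 1 := fun s ω hs => by
    rw [hD]
    simp only [Real.exp_le_one_iff, neg_nonpos]
    exact intervalIntegral.integral_nonneg hs fun u _ => hr0 _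
  clear hD hDe
  -- general facts
  have gen : ∀ (h : ℝ × Ω → ℝ) (C : ℝ), Measurable h → (∀ p, |h p| ≤ C) →
      (∀ t ω, 0 ≤ t → IntervalIntegrable (fun s => D s ω * h (s, ω)) volume 0 t) ∧
      (∀ t ω, 0 ≤ t → ‖∫ s in (0:ℝ)..t, D s ω * h (s, ω)‖ ≤ C * t) ∧
      (∀ τ : Ω → ℝ, Measurable τ →
        Measurable (fun ω => ∫ s in (0:ℝ)..(τ ω), D s ω * h (s, ω))) := by
    intro h C hm hb
    have hmm : Measurable (fun p : ℝ × Ω => D p.1 p.2 * h p) := hDm.mul hm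
    have bd : ∀ s ω, 0 ≤ s → ‖D s ω * h (s, ω)‖ ≤ C := by
      intro s ω hs
      rw [norm_mul, Real.norm_eq_abs, Real.norm_eq_abs, abs_of_nonneg (hD0 s ω)]
      calc D s ω * |h (s, ω)| ≤ 1 * |h (s, ω)| :=
            mul_le_mul_of_nonneg_right (hD1 s ω hs) (abs_nonneg _)
        _ ≤ C := by rw [one_mul]; exact hb _
    refine ⟨fun t ω ht => ?_, fun t ω ht => ?_, fun τ hτ => ?_⟩
    · rw [intervalIntegrable_iff_integrableOn_Ioc_of_le ht]
      refine Measure.integrableOn_of_bounded (M := C) (by simp)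
        (hmm.comp (measurable_id.prodMk measurable_const)).aestronglyMeasurable ?_
      filter_upwards [ae_restrict_mem measurableSet_Ioc] with s hs
      exact bd s ω hs.1.le
    · have := intervalIntegral.norm_integral_le_of_norm_le_const (a := 0) (b := t) (C := C)
        (f := fun s => D s ω * h (s, ω)) (fun s hs => by
          rw [uIoc_of_le ht] at hs
          exact bd s ω hs.1.le)
      simpa [abs_of_nonneg ht] using this
    · exact (aux_int _ hmm).comp (hτ.prodMk measurable_id)
  obtain ⟨iA, bA, mA⟩ := gen (fun p => f (X p.1 p.2)) Cf (hf.comp hXm) (fun p => hfb _)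
  obtain ⟨iB, bB, mB⟩ := gen (fun p => 1) 1 measurable_const (fun p => by simp)
  obtain ⟨iF, bF, mF⟩ := gen (fun p => f (X p.1 p.2) - d) (Cf + |d|)
    ((hf.comp hXm).sub measurable_const)
    (fun p => (abs_sub _ _).trans (add_le_add (hfb _) le_rfl))
  simp only [mul_one] at iB bB mB
  have IA : Integrable (fun ω => ∫ s in (0:ℝ)..(σ ω), D s ω * f (X s ω)) P :=
    (hσint.const_mul Cf).mono' (mA σ hσm).aestronglyMeasurable
      (Eventually.of_forall fun ω => bA _ ω (hσ0 ω))
  have IB : Integrable (fun ω => ∫ s in (0:ℝ)..(σ ω), D s ω) P :=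
    (hσint.const_mul 1).mono' (mB σ hσm).aestronglyMeasurable
      (Eventually.of_forall fun ω => bB _ ω (hσ0 ω))
  have bC : ∀ ω, ‖D (σ ω) ω * g (X (σ ω) ω)‖ ≤ Cg := by
    intro ω
    rw [norm_mul, Real.norm_eq_abs, Real.norm_eq_abs, abs_of_nonneg (hD0 _ ω)]
    calc D (σ ω) ω * |g (X (σ ω) ω)| ≤ 1 * |g (X (σ ω) ω)| :=
          mul_le_mul_of_nonneg_right (hD1 _ ω (hσ0 ω)) (abs_nonneg _)
      _ ≤ Cg := by rw [one_mul]; exact hgb _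
  have mpair : Measurable (fun ω => (σ ω, ω)) := hσm.prodMk measurable_id
  have IC : Integrable (fun ω => D (σ ω) ω * g (X (σ ω) ω)) P :=
    (integrable_const Cg).mono'
      ((hDm.comp mpair).mul (hg.comp (hXm.comp mpair))).aestronglyMeasurable
      (Eventually.of_forall bC)
  rw [integral_add IA IC] at hval
  have hC : ∫ ω, D (σ ω) ω * g (X (σ ω) ω) ∂P ≤ Cg := by
    have := integral_mono IC (integrable_const Cg) (fun ω => (le_abs_self _).trans (bC ω))
    simpa using this
  have lim : Tendsto (fun n : ℕ => ∫ ω, (∫ s in (0:ℝ)..(min (σ ω) n),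
      D s ω * (f (X s ω) - d)) ∂P) atTop
      (𝓝 (∫ ω, (∫ s in (0:ℝ)..(σ ω), D s ω * (f (X s ω) - d)) ∂P)) := by
    refine tendsto_integral_of_dominated_convergence (fun ω => (Cf + |d|) * σ ω)
      (fun n => (mF _ (hσm.min measurable_const)).aestronglyMeasurable)
      (hσint.const_mul _) (fun n => Eventually.of_forall fun ω => ?_)
      (Eventually.of_forall fun ω => ?_)
    · refine (bF _ ω (le_min (hσ0 ω) n.cast_nonneg)).trans ?_
      have : 0 ≤ Cf := (abs_nonneg _).trans (hfb (X 0 ω))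
      exact mul_le_mul_of_nonneg_left (min_le_left _ _) (by positivity)
    · refine tendsto_const_nhds.congr' ?_
      filter_upwards [eventually_ge_atTop (⌈σ ω⌉₊)] with n hn
      have : σ ω ≤ n := (Nat.le_ceil _).trans (by exact_mod_cast hn)
      rw [min_eq_left this]
  have hle := le_of_tendsto' lim (fun n => hγ σ hσ hσ0 n n.cast_nonneg)
  have heq : ∫ ω, (∫ s in (0:ℝ)..(σ ω), D s ω * (f (X s ω) - d)) ∂P
      = (∫ ω, (∫ s in (0:ℝ)..(σ ω), D s ω * f (X s ω)) ∂P)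
        - (∫ ω, (∫ s in (0:ℝ)..(σ ω), D s ω) ∂P) * d := by
    rw [← integral_mul_const, ← integral_sub IA (IB.mul_const d)]
    refine integral_congr_ae (Eventually.of_forall fun ω => ?_)
    simp only
    rw [← intervalIntegral.integral_mul_const,
      ← intervalIntegral.integral_sub (iA _ ω (hσ0 ω)) ((iB _ ω (hσ0 ω)).mul_const d)]
    simp only [mul_sub]
  rw [le_div_iff₀ (by linarith)]
  linarith
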